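/- (Theorem 1, property (5), pointwise form) Let n ∈ Im(Ca') with g(n,n) = 1, and let X, Y, Z ∈ Im(Ca') with g(X,n) = g(Y,n) = g(Z,n) = 0. With J X := n×X, the 3-form dω = 3Ω satisfies dω(X, JY, JZ) = −dω(X,Y,Z); explicitly, g(X×(n×Y), n×Z) = −g(X×Y, Z). -/

import Mathlib

-- The split octonion algebra Ca' as pairs of real quaternions.
noncomputable section

abbrev Ca : Type := Quaternion ℝ × Quaternion ℝ

namespace Ca

/-- Split octonion multiplication: (a,b)·(c,d) = (ac + (conj d)b, da + b(conj c)). -/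
def mul (x y : Ca) : Ca :=
  (x.1 * y.1 + star y.2 * x.2, y.2 * x.1 + x.2 * star y.1)

/-- The unit (1,0). -/
def one : Ca := (1, 0)

/-- Conjugation conj(a,b) = (conj a, −b). -/
def conj (x : Ca) : Ca := (star x.1, -x.2)

/-- Real part Re(a,b) = re a. -/
def re (x : Ca) : ℝ := x.1.re

/-- Norm form N(a,b) = ‖a‖² − ‖b‖², of signature (4,4). -/
def N (x : Ca) : ℝ := Quaternion.normSq x.1 - Quaternion.normSq x.2

/-- The symmetric bilinear form ⟨x,y⟩ = (N(x+y) − N(x) − N(y))/2. -/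
def bil (x y : Ca) : ℝ := (N (x + y) - N x - N y) / 2

/-- The vector cross product on Im(Ca'): X × Y := X·Y + g(X,Y)·1. -/
def cross (X Y : Ca) : Ca := mul X Y + bil X Y • one

end Ca

set_option linter.unusedSimpArgs false

theorem bil_eq (x y : Ca) : Ca.bil x y =
    x.1.re * y.1.re + x.1.imI * y.1.imI + x.1.imJ * y.1.imJ + x.1.imK * y.1.imK
    - (x.2.re * y.2.re + x.2.imI * y.2.imI + x.2.imJ * y.2.imJ + x.2.imK * y.2.imK) := by
  simp only [Ca.bil, Ca.N, Quaternion.normSq_def', Prod.fst_add, Prod.snd_add,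
    Quaternion.re_add, Quaternion.imI_add, Quaternion.imJ_add, Quaternion.imK_add]
  ring

theorem bil_add_left (x y z : Ca) : Ca.bil (x + y) z = Ca.bil x z + Ca.bil y z := by
  simp only [bil_eq, Prod.fst_add, Prod.snd_add,
    Quaternion.re_add, Quaternion.imI_add, Quaternion.imJ_add, Quaternion.imK_add]
  ring

theorem bil_smul_left (r : ℝ) (x z : Ca) : Ca.bil (r • x) z = r * Ca.bil x z := by
  simp only [bil_eq, Prod.smul_fst, Prod.smul_snd, Quaternion.re_smul, Quaternion.imI_smul,
    Quaternion.imJ_smul, Quaternion.imK_smul, smul_eq_mul]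
  ring

theorem cross_1_re (x y : Ca) : (Ca.cross x y).1.re =
    x.1.re * y.1.re - x.1.imI * y.1.imI - x.1.imJ * y.1.imJ - x.1.imK * y.1.imK
      + y.2.re * x.2.re + y.2.imI * x.2.imI + y.2.imJ * x.2.imJ + y.2.imK * x.2.imK + Ca.bil x y := by
  have h1 : (1 : Quaternion ℝ).re = 1 := rfl
  have h2 : (1 : Quaternion ℝ).imI = 0 := rfl
  have h3 : (1 : Quaternion ℝ).imJ = 0 := rfl
  have h4 : (1 : Quaternion ℝ).imK = 0 := rfl
  simp [Ca.cross, Ca.mul, Ca.one, h1, h2, h3, h4]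
  try ring

theorem cross_1_imI (x y : Ca) : (Ca.cross x y).1.imI =
    x.1.re * y.1.imI + x.1.imI * y.1.re + x.1.imJ * y.1.imK - x.1.imK * y.1.imJ
      + y.2.re * x.2.imI - y.2.imI * x.2.re - y.2.imJ * x.2.imK + y.2.imK * x.2.imJ := by
  have h1 : (1 : Quaternion ℝ).re = 1 := rfl
  have h2 : (1 : Quaternion ℝ).imI = 0 := rfl
  have h3 : (1 : Quaternion ℝ).imJ = 0 := rfl
  have h4 : (1 : Quaternion ℝ).imK = 0 := rfl
  simp [Ca.cross, Ca.mul, Ca.one, h1, h2, h3, h4]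
  try ring

theorem cross_1_imJ (x y : Ca) : (Ca.cross x y).1.imJ =
    x.1.re * y.1.imJ - x.1.imI * y.1.imK + x.1.imJ * y.1.re + x.1.imK * y.1.imI
      + y.2.re * x.2.imJ + y.2.imI * x.2.imK - y.2.imJ * x.2.re - y.2.imK * x.2.imI := by
  have h1 : (1 : Quaternion ℝ).re = 1 := rfl
  have h2 : (1 : Quaternion ℝ).imI = 0 := rfl
  have h3 : (1 : Quaternion ℝ).imJ = 0 := rfl
  have h4 : (1 : Quaternion ℝ).imK = 0 := rfl
  simp [Ca.cross, Ca.mul, Ca.one, h1, h2, h3, h4]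
  try ring

theorem cross_1_imK (x y : Ca) : (Ca.cross x y).1.imK =
    x.1.re * y.1.imK + x.1.imI * y.1.imJ - x.1.imJ * y.1.imI + x.1.imK * y.1.re
      + y.2.re * x.2.imK - y.2.imI * x.2.imJ + y.2.imJ * x.2.imI - y.2.imK * x.2.re := by
  have h1 : (1 : Quaternion ℝ).re = 1 := rfl
  have h2 : (1 : Quaternion ℝ).imI = 0 := rfl
  have h3 : (1 : Quaternion ℝ).imJ = 0 := rfl
  have h4 : (1 : Quaternion ℝ).imK = 0 := rfl
  simp [Ca.cross, Ca.mul, Ca.one, h1, h2, h3, h4]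
  try ring

theorem cross_2_re (x y : Ca) : (Ca.cross x y).2.re =
    y.2.re * x.1.re - y.2.imI * x.1.imI - y.2.imJ * x.1.imJ - y.2.imK * x.1.imK
      + x.2.re * y.1.re + x.2.imI * y.1.imI + x.2.imJ * y.1.imJ + x.2.imK * y.1.imK := by
  have h1 : (1 : Quaternion ℝ).re = 1 := rfl
  have h2 : (1 : Quaternion ℝ).imI = 0 := rfl
  have h3 : (1 : Quaternion ℝ).imJ = 0 := rfl
  have h4 : (1 : Quaternion ℝ).imK = 0 := rfl
  simp [Ca.cross, Ca.mul, Ca.one, h1, h2, h3, h4]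
  try ring

theorem cross_2_imI (x y : Ca) : (Ca.cross x y).2.imI =
    y.2.re * x.1.imI + y.2.imI * x.1.re + y.2.imJ * x.1.imK - y.2.imK * x.1.imJ
      - x.2.re * y.1.imI + x.2.imI * y.1.re - x.2.imJ * y.1.imK + x.2.imK * y.1.imJ := by
  have h1 : (1 : Quaternion ℝ).re = 1 := rfl
  have h2 : (1 : Quaternion ℝ).imI = 0 := rfl
  have h3 : (1 : Quaternion ℝ).imJ = 0 := rfl
  have h4 : (1 : Quaternion ℝ).imK = 0 := rfl
  simp [Ca.cross, Ca.mul, Ca.one, h1, h2, h3, h4]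
  try ring

theorem cross_2_imJ (x y : Ca) : (Ca.cross x y).2.imJ =
    y.2.re * x.1.imJ - y.2.imI * x.1.imK + y.2.imJ * x.1.re + y.2.imK * x.1.imI
      - x.2.re * y.1.imJ + x.2.imI * y.1.imK + x.2.imJ * y.1.re - x.2.imK * y.1.imI := by
  have h1 : (1 : Quaternion ℝ).re = 1 := rfl
  have h2 : (1 : Quaternion ℝ).imI = 0 := rfl
  have h3 : (1 : Quaternion ℝ).imJ = 0 := rfl
  have h4 : (1 : Quaternion ℝ).imK = 0 := rfl
  simp [Ca.cross, Ca.mul, Ca.one, h1, h2, h3, h4]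
  try ring

theorem cross_2_imK (x y : Ca) : (Ca.cross x y).2.imK =
    y.2.re * x.1.imK + y.2.imI * x.1.imJ - y.2.imJ * x.1.imI + y.2.imK * x.1.re
      - x.2.re * y.1.imK - x.2.imI * y.1.imJ + x.2.imJ * y.1.imI + x.2.imK * y.1.re := by
  have h1 : (1 : Quaternion ℝ).re = 1 := rfl
  have h2 : (1 : Quaternion ℝ).imI = 0 := rfl
  have h3 : (1 : Quaternion ℝ).imJ = 0 := rfl
  have h4 : (1 : Quaternion ℝ).imK = 0 := rfl
  simp [Ca.cross, Ca.mul, Ca.one, h1, h2, h3, h4]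
  try ring

theorem cross_re (x y : Ca) (hx : Ca.re x = 0) (hy : Ca.re y = 0) :
    Ca.re (Ca.cross x y) = 0 := by
  simp only [Ca.re] at hx hy
  simp only [Ca.re, cross_1_re, cross_1_imI, cross_1_imJ, cross_1_imK, cross_2_re, cross_2_imI, cross_2_imJ, cross_2_imK,
    bil_eq, hx, hy, Prod.fst_add, Prod.snd_add, Prod.smul_fst, Prod.smul_snd,
    Quaternion.re_add, Quaternion.imI_add, Quaternion.imJ_add, Quaternion.imK_add,
    Quaternion.re_smul, Quaternion.imI_smul, Quaternion.imJ_smul, Quaternion.imK_smul, smul_eq_mul]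
  ring

/-- `g(n, n × Z) = 0`. -/
theorem bil_cross_self (n z : Ca) (hn : Ca.re n = 0) (hz : Ca.re z = 0) :
    Ca.bil n (Ca.cross n z) = 0 := by
  simp only [Ca.re] at hn hz
  simp only [cross_1_re, cross_1_imI, cross_1_imJ, cross_1_imK, cross_2_re, cross_2_imI, cross_2_imJ, cross_2_imK,
    bil_eq, hn, hz, Prod.fst_add, Prod.snd_add, Prod.smul_fst, Prod.smul_snd,
    Quaternion.re_add, Quaternion.imI_add, Quaternion.imJ_add, Quaternion.imK_add,
    Quaternion.re_smul, Quaternion.imI_smul, Quaternion.imJ_smul, Quaternion.imK_smul, smul_eq_mul]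
  ring

/-- `g(n × A, n × Z) = g(n,n) g(A,Z) - g(n,A) g(Z,n)`. -/
theorem bil_cross_cross (n a z : Ca) (hn : Ca.re n = 0) (ha : Ca.re a = 0) (hz : Ca.re z = 0) :
    Ca.bil (Ca.cross n a) (Ca.cross n z)
      = Ca.bil n n * Ca.bil a z - Ca.bil n a * Ca.bil z n := by
  simp only [Ca.re] at hn ha hz
  simp only [cross_1_re, cross_1_imI, cross_1_imJ, cross_1_imK, cross_2_re, cross_2_imI, cross_2_imJ, cross_2_imK,
    bil_eq, hn, ha, hz, Prod.fst_add, Prod.snd_add, Prod.smul_fst, Prod.smul_snd,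
    Quaternion.re_add, Quaternion.imI_add, Quaternion.imJ_add, Quaternion.imK_add,
    Quaternion.re_smul, Quaternion.imI_smul, Quaternion.imJ_smul, Quaternion.imK_smul, smul_eq_mul]
  ring

/-- The polarized double cross product identity. -/
theorem ca_cross_cross (x n y : Ca) (hx : Ca.re x = 0) (hn : Ca.re n = 0) (hy : Ca.re y = 0) :
    Ca.cross x (Ca.cross n y) = (-1 : ℝ) • Ca.cross n (Ca.cross x y) + Ca.bil x y • n
      + (Ca.bil y n • x + (-2 * Ca.bil x n) • y) := by
  simp only [Ca.re] at hx hn hy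
  refine Prod.ext (QuaternionAlgebra.ext ?_ ?_ ?_ ?_) (QuaternionAlgebra.ext ?_ ?_ ?_ ?_) <;>
  · simp only [cross_1_re, cross_1_imI, cross_1_imJ, cross_1_imK, cross_2_re, cross_2_imI, cross_2_imJ, cross_2_imK,
    bil_eq, hx, hn, hy, Prod.fst_add, Prod.snd_add, Prod.smul_fst, Prod.smul_snd,
    Quaternion.re_add, Quaternion.imI_add, Quaternion.imJ_add, Quaternion.imK_add,
    Quaternion.re_smul, Quaternion.imI_smul, Quaternion.imJ_smul, Quaternion.imK_smul, smul_eq_mul]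
    ring

/-- Theorem 1, property (5): dω(X,JY,JZ) = −dω(X,Y,Z), i.e.
g(X×(n×Y), n×Z) = −g(X×Y, Z). -/
theorem domega_JJ (n X Y Z : Ca)
    (hn : Ca.re n = 0) (hnn : Ca.bil n n = 1)
    (hX : Ca.re X = 0) (hY : Ca.re Y = 0) (hZ : Ca.re Z = 0)
    (hXn : Ca.bil X n = 0) (hYn : Ca.bil Y n = 0) (hZn : Ca.bil Z n = 0) :
    Ca.bil (Ca.cross X (Ca.cross n Y)) (Ca.cross n Z) = -(Ca.bil (Ca.cross X Y) Z) := by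
  rw [ca_cross_cross X n Y hX hn hY, hXn, hYn]
  simp only [bil_add_left, bil_smul_left]
  rw [bil_cross_cross n _ Z hn (cross_re X Y hX hY) hZ, bil_cross_self n Z hn hZ, hnn, hZn]
  ring
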